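/- arXiv:2406.19000 — 5 statements merged into one kernel-verified Lean document; each statement's English description precedes it below -/
import Mathlib

section
/- Let m > 0, h > 0, let V : ℝ → ℝ be differentiable, and let q_{j-1}, q_j, q_{j+1} ∈ ℝ. The real function x ↦ L_N(q_{j-1}, x) + L_N(x, q_{j+1}) has derivative zero at x = q_j if and only if (q_{j+1} − 2 q_j + q_{j-1})/h² + (1/(2m)) ( V'((q_j + q_{j+1})/2) + V'((q_{j-1} + q_j)/2) ) = 0. -/
/-- The Newmark discrete Lagrangian `L_N(qℓ, qr) = (m h/2)((qr − qℓ)/h)² − h V((qℓ + qr)/2)`. -/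
noncomputable def newmarkLagrangian (m h : ℝ) (V : ℝ → ℝ) (ql qr : ℝ) : ℝ :=
  m * h / 2 * ((qr - ql) / h) ^ 2 - h * V ((ql + qr) / 2)

/-- the function `x ↦ L_N(q_{j-1}, x) + L_N(x, q_{j+1})` has derivative zero at
`x = q_j` iff the Newmark scheme equation holds. -/
theorem newmark_euler_lagrange (m h : ℝ) (hm : 0 < m) (hh : 0 < h)
    (V : ℝ → ℝ) (hV : Differentiable ℝ V) (qjm qj qjp : ℝ) :
    deriv (fun x => newmarkLagrangian m h V qjm x + newmarkLagrangian m h V x qjp) qj = 0 ↔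
      (qjp - 2 * qj + qjm) / h ^ 2
        + 1 / (2 * m) * (deriv V ((qj + qjp) / 2) + deriv V ((qjm + qj) / 2)) = 0 := by
  have hl : HasDerivAt (fun x : ℝ => (qjm + x) / 2) (1 / 2) qj :=
    ((hasDerivAt_id qj).const_add qjm).div_const 2
  have hr : HasDerivAt (fun x : ℝ => (x + qjp) / 2) (1 / 2) qj :=
    ((hasDerivAt_id qj).add_const qjp).div_const 2
  have hVl : HasDerivAt (fun x : ℝ => V ((qjm + x) / 2))
      (deriv V ((qjm + qj) / 2) * (1 / 2)) qj :=
    HasDerivAt.comp qj (hV ((qjm + qj) / 2)).hasDerivAt hl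
  have hVr : HasDerivAt (fun x : ℝ => V ((x + qjp) / 2))
      (deriv V ((qj + qjp) / 2) * (1 / 2)) qj :=
    HasDerivAt.comp qj (hV ((qj + qjp) / 2)).hasDerivAt hr
  have hkl : HasDerivAt (fun x : ℝ => (x - qjm) / h) (1 / h) qj :=
    ((hasDerivAt_id qj).sub_const qjm).div_const h
  have hkr : HasDerivAt (fun x : ℝ => (qjp - x) / h) (-1 / h) qj :=
    ((hasDerivAt_id qj).const_sub qjp).div_const h
  have hd := (((hkl.pow 2).const_mul (m * h / 2)).sub (hVl.const_mul h)).add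
    (((hkr.pow 2).const_mul (m * h / 2)).sub (hVr.const_mul h))
  have key : HasDerivAt
      (fun x => newmarkLagrangian m h V qjm x + newmarkLagrangian m h V x qjp)
      (-(m * h) * ((qjp - 2 * qj + qjm) / h ^ 2
        + 1 / (2 * m) * (deriv V ((qj + qjp) / 2) + deriv V ((qjm + qj) / 2)))) qj := by
    refine HasDerivAt.congr_deriv (f' := _) hd ?_
    have hm' := hm.ne'
    have hh' := hh.ne'
    norm_num
    field_simp
    ring
  rw [key.deriv, mul_eq_zero, or_iff_right]
  have := mul_pos hm hh
  exact neg_ne_zero.mpr this.ne'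
end

section
/- Let m, h > 0, let V : ℝ → ℝ be differentiable at q_m, and let q_ℓ, q_m, q_r ∈ ℝ. Then the partial derivative of the Simpson discrete Lagrangian L_S with respect to its middle argument at (q_ℓ, q_m, q_r) equals (16 m/(3h)) ( q_m − (q_ℓ + q_r)/2 ) − (2h/3) V'(q_m); consequently ∂L_S/∂q_m (q_ℓ, q_m, q_r) = 0 if and only if q_m − (h²/(8m)) V'(q_m) = (q_ℓ + q_r)/2. -/
/-- The Simpson discrete Lagrangian
`L_S(qℓ, qm, qr) = (m h/12)(gℓ² + 4 gm² + gr²) − (h/6)(V(qℓ) + 4 V(qm) + V(qr))`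
with `gℓ = (−3 qℓ + 4 qm − qr)/h`, `gm = (qr − qℓ)/h`, `gr = (qℓ − 4 qm + 3 qr)/h`. -/
noncomputable def simpsonLagrangian (m h : ℝ) (V : ℝ → ℝ) (ql qm qr : ℝ) : ℝ :=
  m * h / 12 * (((-3 * ql + 4 * qm - qr) / h) ^ 2 + 4 * ((qr - ql) / h) ^ 2
      + ((ql - 4 * qm + 3 * qr) / h) ^ 2)
    - h / 6 * (V ql + 4 * V qm + V qr)

/-- the partial derivative of the Simpson discrete Lagrangian with respect to
its middle argument, and the resulting implicit midpoint equation. -/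
theorem simpson_middle_derivative (m h : ℝ) (hm : 0 < m) (hh : 0 < h)
    (V : ℝ → ℝ) (ql qm qr : ℝ) (hV : DifferentiableAt ℝ V qm) :
    deriv (fun x => simpsonLagrangian m h V ql x qr) qm
        = 16 * m / (3 * h) * (qm - (ql + qr) / 2) - 2 * h / 3 * deriv V qm ∧
      (deriv (fun x => simpsonLagrangian m h V ql x qr) qm = 0 ↔
        qm - h ^ 2 / (8 * m) * deriv V qm = (ql + qr) / 2) := by
  have hm0 : m ≠ 0 := hm.ne'
  have hh0 : h ≠ 0 := hh.ne'
  have hid := hasDerivAt_id qm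
  have h1 := (((((hid.const_mul 4).const_add (-3 * ql)).sub_const qr).div_const h).pow 2)
  have h2 := (((((hid.const_mul 4).const_sub ql).add_const (3 * qr)).div_const h).pow 2)
  have h3 := ((hV.hasDerivAt.const_mul 4).const_add (V ql)).add_const (V qr)
  have h4 := (((h1.add_const (4 * ((qr - ql) / h) ^ 2)).add h2).const_mul (m * h / 12)).sub
    (h3.const_mul (h / 6))
  have key : deriv (fun x => simpsonLagrangian m h V ql x qr) qm
      = 16 * m / (3 * h) * (qm - (ql + qr) / 2) - 2 * h / 3 * deriv V qm := by
    refine Eq.trans (HasDerivAt.deriv (f := fun x => simpsonLagrangian m h V ql x qr) h4) ?_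
    norm_num only [id, pow_one, Nat.cast_ofNat, Nat.reduceSub]
    field_simp
    ring
  refine ⟨key, ?_⟩
  rw [key]
  have e : 16 * m / (3 * h) * (qm - (ql + qr) / 2) - 2 * h / 3 * deriv V qm
      = 16 * m / (3 * h) * ((qm - h ^ 2 / (8 * m) * deriv V qm) - (ql + qr) / 2) := by
    field_simp
    ring
  have hc : 16 * m / (3 * h) ≠ 0 := by positivity
  rw [e, mul_eq_zero, or_iff_right hc, sub_eq_zero]
end

section
/- Let m, h > 0, let V : ℝ → ℝ be differentiable, and let q_{j-1}, q_{j-1/2}, q_j, q_{j+1/2}, q_{j+1} ∈ ℝ satisfy the midpoint equations q_{j-1/2} − (h²/(8m)) V'(q_{j-1/2}) = (q_{j-1} + q_j)/2 and q_{j+1/2} − (h²/(8m)) V'(q_{j+1/2}) = (q_j + q_{j+1})/2. Then the discrete Euler–Lagrange equation ∂L_S/∂q_r (q_{j-1}, q_{j-1/2}, q_j) + ∂L_S/∂q_ℓ (q_j, q_{j+1/2}, q_{j+1}) = 0 holds if and only if (q_{j-1} − 2 q_j + q_{j+1})/h² + (1/(3m)) ( V'(q_{j-1/2}) + V'(q_j)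 + V'(q_{j+1/2}) ) = 0. -/
/-- under the midpoint equations, the discrete Euler–Lagrange equation
for the Simpson scheme is equivalent to the node equation. -/
theorem simpson_euler_lagrange_node (m h : ℝ) (hm : 0 < m) (hh : 0 < h)
    (V : ℝ → ℝ) (hV : Differentiable ℝ V)
    (qjm qjmh qj qjph qjp : ℝ)
    (hmidL : qjmh - h ^ 2 / (8 * m) * deriv V qjmh = (qjm + qj) / 2)
    (hmidR : qjph - h ^ 2 / (8 * m) * deriv V qjph = (qj + qjp) / 2) :
    deriv (fun x => simpsonLagrangian m h V qjm qjmh x) qj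
        + deriv (fun x => simpsonLagrangian m h V x qjph qjp) qj = 0 ↔
      (qjm - 2 * qj + qjp) / h ^ 2
        + 1 / (3 * m) * (deriv V qjmh + deriv V qj + deriv V qjph) = 0 := by
  have hh' : h ≠ 0 := hh.ne'
  have hm' : m ≠ 0 := hm.ne'
  have hd := (hV qj).hasDerivAt
  have hx := hasDerivAt_id' qj
  have h1 : HasDerivAt (fun x => simpsonLagrangian m h V qjm qjmh x)
      (m / (6 * h) * (2 * qjm - 16 * qjmh + 14 * qj) - h / 6 * deriv V qj) qj := by
    unfold simpsonLagrangian
    have a := ((hx.const_sub (-3 * qjm + 4 * qjmh)).div_const h).fun_pow 2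
    have b := (((hx.sub_const qjm).div_const h).fun_pow 2).const_mul 4
    have c := (((hx.const_mul 3).const_add (qjm - 4 * qjmh)).div_const h).fun_pow 2
    have d := (hd.const_add (V qjm + 4 * V qjmh)).const_mul (h / 6)
    refine ((((a.fun_add b).fun_add c).const_mul (m * h / 12)).fun_sub d).congr_deriv ?_
    push_cast
    field_simp
    ring
  have h2 : HasDerivAt (fun x => simpsonLagrangian m h V x qjph qjp)
      (m / (6 * h) * (14 * qj - 16 * qjph + 2 * qjp) - h / 6 * deriv V qj) qj := by
    unfold simpsonLagrangian
    have a := ((((hx.const_mul (-3)).add_const (4 * qjph)).sub_const qjp).div_const h).fun_pow 2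
    have b := (((hx.const_sub qjp).div_const h).fun_pow 2).const_mul 4
    have c := (((hx.sub_const (4 * qjph)).add_const (3 * qjp)).div_const h).fun_pow 2
    have d := ((hd.add_const (4 * V qjph)).add_const (V qjp)).const_mul (h / 6)
    refine ((((a.fun_add b).fun_add c).const_mul (m * h / 12)).fun_sub d).congr_deriv ?_
    push_cast
    field_simp
    ring
  rw [h1.deriv, h2.deriv]
  have e1 : qjmh = (qjm + qj) / 2 + h ^ 2 / (8 * m) * deriv V qjmh := by linarith
  have e2 : qjph = (qj + qjp) / 2 + h ^ 2 / (8 * m) * deriv V qjph := by linarith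
  generalize deriv V qjmh = A at *
  generalize deriv V qjph = B at *
  have key : m / (6 * h) * (2 * qjm - 16 * qjmh + 14 * qj) - h / 6 * deriv V qj
      + (m / (6 * h) * (14 * qj - 16 * qjph + 2 * qjp) - h / 6 * deriv V qj)
      = -(m * h) * ((qjm - 2 * qj + qjp) / h ^ 2
        + 1 / (3 * m) * (A + deriv V qj + B)) := by
    rw [e1, e2]
    field_simp
    ring
  rw [key]
  have : -(m * h) ≠ 0 := neg_ne_zero.mpr (mul_ne_zero hm' hh')
  simp only [mul_eq_zero, this, false_or]
end

section
/- Let m, h > 0, let V : ℝ → ℝ be differentiable, and let q_ℓ, q_m, q_r ∈ ℝ satisfy the midpoint equation q_m − (h²/(8m)) V'(q_m) = (q_ℓ + q_r)/2. Then the right momentum p_r = ∂L_S/∂q_r (q_ℓ, q_m, q_r) satisfies p_r = (m/h)(q_r − q_ℓ) − (h/6)( 2 V'(q_m) + V'(q_r) ). -/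
/-- under the midpoint equation, the right momentum
`p_r = ∂L_S/∂q_r (qℓ, qm, qr)` has the stated closed form. -/
theorem simpson_right_momentum (m h : ℝ) (hm : 0 < m) (hh : 0 < h)
    (V : ℝ → ℝ) (hV : Differentiable ℝ V) (ql qm qr : ℝ)
    (hmid : qm - h ^ 2 / (8 * m) * deriv V qm = (ql + qr) / 2) :
    deriv (fun x => simpsonLagrangian m h V ql qm x) qr
      = m / h * (qr - ql) - h / 6 * (2 * deriv V qm + deriv V qr) := by
  have hid := hasDerivAt_id' qr
  have h1 := (((hid.const_sub (-3 * ql + 4 * qm)).div_const h).pow 2)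
  have h2 := ((((hid.sub_const ql).div_const h).pow 2).const_mul 4)
  have h3 := ((((hid.const_mul 3).const_add (ql - 4 * qm)).div_const h).pow 2)
  have h4 := (((hV qr).hasDerivAt.const_add (V ql + 4 * V qm)).const_mul (h / 6))
  have h5 := (((h1.add h2).add h3).const_mul (m * h / 12)).sub h4
  have h6 : deriv (fun x => simpsonLagrangian m h V ql qm x) qr = _ := h5.deriv
  rw [h6]
  have hq : qm = (ql + qr) / 2 + h ^ 2 / (8 * m) * deriv V qm := by linarith
  generalize deriv V qm = d at *
  subst hq
  have := hm.ne'
  have := hh.ne'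
  push_cast
  field_simp
  ring
end

section
/- Let ω > 0, k ∈ (0, 1), T > 0, and let φ : [0, T/4] → ℝ be differentiable with φ(0) = π/2, φ(T/4) = 0, φ'(t) = −ω √(1 − k² sin²(φ(t))) for all t ∈ [0, T/4], and φ(t) ∈ [0, π/2] for all t ∈ [0, T/4]. Then ω T/4 = ∫₀^{π/2} dξ / √(1 − k² sin² ξ) = K(k²); i.e. the period T of the nonlinear pendulum satisfies T = (4/ω) K(k²). -/
/-- The complete elliptic integral of the first kind
`K(m) = ∫₀^{π/2} dξ / √(1 − m sin² ξ)`. -/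
noncomputable def ellipticK (m : ℝ) : ℝ :=
  ∫ ξ in (0 : ℝ)..(Real.pi / 2), 1 / Real.sqrt (1 - m * Real.sin ξ ^ 2)

/-- the period of the nonlinear pendulum satisfies
`ω T/4 = K(k²)`, i.e. `T = (4/ω) K(k²)`. -/
theorem pendulum_period_elliptic (ω k T : ℝ) (hω : 0 < ω) (hk : k ∈ Set.Ioo (0 : ℝ) 1)
    (hT : 0 < T) (φ : ℝ → ℝ)
    (hφ0 : φ 0 = Real.pi / 2) (hφT4 : φ (T / 4) = 0)
    (hφ' : ∀ t ∈ Set.Icc (0 : ℝ) (T / 4),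
      HasDerivAt φ (-ω * Real.sqrt (1 - k ^ 2 * Real.sin (φ t) ^ 2)) t)
    (hφrange : ∀ t ∈ Set.Icc (0 : ℝ) (T / 4), φ t ∈ Set.Icc (0 : ℝ) (Real.pi / 2)) :
    ω * T / 4 = ∫ ξ in (0 : ℝ)..(Real.pi / 2), 1 / Real.sqrt (1 - k ^ 2 * Real.sin ξ ^ 2) ∧
      ω * T / 4 = ellipticK (k ^ 2) ∧ T = 4 / ω * ellipticK (k ^ 2) := by
  have hpos : ∀ x : ℝ, 0 < Real.sqrt (1 - k ^ 2 * Real.sin x ^ 2) := by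
    intro x
    apply Real.sqrt_pos.mpr
    have h1 : Real.sin x ^ 2 ≤ 1 := Real.sin_sq_le_one x
    have h2 : k ^ 2 < 1 := by nlinarith [hk.1, hk.2]
    nlinarith [sq_nonneg k]
  have hT4 : (0 : ℝ) ≤ T / 4 := by positivity
  have hu : Set.uIcc (0 : ℝ) (T / 4) = Set.Icc 0 (T / 4) := Set.uIcc_of_le hT4
  have hcont : ContinuousOn φ (Set.Icc 0 (T / 4)) :=
    fun t ht => (hφ' t ht).continuousAt.continuousWithinAt
  have key := intervalIntegral.integral_comp_mul_deriv (a := 0) (b := T / 4) (f := φ)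
    (f' := fun t => -ω * Real.sqrt (1 - k ^ 2 * Real.sin (φ t) ^ 2))
    (g := fun x => 1 / Real.sqrt (1 - k ^ 2 * Real.sin x ^ 2))
    (by rw [hu]; exact hφ')
    (by rw [hu]; fun_prop)
    (Continuous.div continuous_const (by fun_prop) (fun x => (hpos x).ne'))
  have hconst : (fun t => ((fun x => 1 / Real.sqrt (1 - k ^ 2 * Real.sin x ^ 2)) ∘ φ) t *
      (-ω * Real.sqrt (1 - k ^ 2 * Real.sin (φ t) ^ 2))) = fun _ => -ω := by
    funext t
    have := (hpos (φ t)).ne'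
    simp only [Function.comp]
    field_simp
  rw [hconst, hφ0, hφT4, intervalIntegral.integral_const,
    smul_eq_mul] at key
  rw [intervalIntegral.integral_symm 0 (Real.pi / 2)] at key
  have main : ω * T / 4 = ∫ ξ in (0 : ℝ)..(Real.pi / 2),
      1 / Real.sqrt (1 - k ^ 2 * Real.sin ξ ^ 2) := by linarith
  have main2 : ω * T / 4 = ellipticK (k ^ 2) := main
  refine ⟨main, main2, ?_⟩
  rw [← main2]
  field_simp
end
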